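/- Let d ≥ 1, 0 < μ < 2, κ₀ > 0. Then f_E is a uniformly temperate weight for the metric g_E, uniformly in E ∈ (0,1]; that is: (a) there exist c, C > 0 such that for all E ∈ (0,1] and all x, y, η ∈ ℝ^d, if |y|²/⟨x⟩² + |η|²/f_E(x)² ≤ c then f_E(x)/C ≤ f_E(x+y) ≤ C f_E(x); and (b) there exist C', N > 0 such that for all E ∈ (0,1] and all x, y, ξ, η ∈ ℝ^d, f_E(y) ≤ C' f_E(x) ( 1 + f_E(y)²|x−y|² + ⟨y⟩²|ξ−η|² )^N. -/

import Mathlib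

open Real

noncomputable section

/-- The Japanese bracket `⟨x⟩ = (1+|x|²)^{1/2}`. -/
def jap {d : ℕ} (x : EuclideanSpace ℝ (Fin d)) : ℝ := Real.sqrt (1 + ‖x‖ ^ 2)

/-- The energy-dependent weight `f_E(x) = (κ₀^{-2}E + (1-μ/2)^{-1}⟨x⟩^{-μ})^{1/2}`. -/
def fE {d : ℕ} (μ κ₀ E : ℝ) (x : EuclideanSpace ℝ (Fin d)) : ℝ :=
  Real.sqrt ((κ₀ ^ 2)⁻¹ * E + (1 - μ/2)⁻¹ * jap x ^ (-μ))

/-- The Hörmander metric `g_{E,(x,ξ)}(v_x,v_ξ) = |v_x|²/⟨x⟩² + |v_ξ|²/f_E(x)²`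
(it depends on the base point only through `x`). -/
def gMet {d : ℕ} (μ κ₀ E : ℝ) (x vx vξ : EuclideanSpace ℝ (Fin d)) : ℝ :=
  ‖vx‖ ^ 2 / jap x ^ 2 + ‖vξ‖ ^ 2 / fE μ κ₀ E x ^ 2

/-!
Since `0 ≤ μ < 2`, changing `⟨x⟩` by a factor `r ≥ 1` changes `f_E` by at most a factor `r`,
whatever `E` is. As `⟨·⟩` is 1-Lipschitz, a displacement of length at most `⟨x⟩ / 2` changes `⟨x⟩`
by a factor of at most `2`, which gives slow variation.

For temperance, the case `⟨x⟩ ≤ 2⟨y⟩` is settled in the same way. If `⟨x⟩ > 2⟨y⟩`, then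
`⟨x⟩ ≤ 2|x - y|`, and the uncertainty bound `1 ≤ f_E(x)⟨x⟩` yields
`f_E(y) ≤ 2 f_E(x) · f_E(y)|x - y|`.
-/

lemma rpow_neg_le_rpow_mul_rpow_neg {r s t p : ℝ} (hr : 0 < r) (hs : 0 < s) (ht : 0 ≤ t)
    (hp : 0 ≤ p) (h : s ≤ r * t) : t ^ (-p) ≤ r ^ p * s ^ (-p) :=
  calc t ^ (-p) = r ^ p * (r * t) ^ (-p) := by
        rw [mul_rpow hr.le ht, ← mul_assoc, ← rpow_add hr, add_neg_cancel, rpow_zero, one_mul]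
    _ ≤ r ^ p * s ^ (-p) := by
        gcongr ?_ * ?_
        exact rpow_le_rpow_of_nonpos hs h (neg_nonpos.2 hp)

section JapaneseBracket

variable {d : ℕ} (x y : EuclideanSpace ℝ (Fin d))

lemma jap_sq : jap x ^ 2 = 1 + ‖x‖ ^ 2 :=
  sq_sqrt (by positivity)

lemma one_le_jap : 1 ≤ jap x :=
  one_le_sqrt.2 (le_add_of_nonneg_right (sq_nonneg _))

lemma jap_pos : 0 < jap x :=
  one_pos.trans_le (one_le_jap x)

lemma norm_le_jap : ‖x‖ ≤ jap x :=
  le_sqrt_of_sq_le (le_add_of_nonneg_left zero_le_one)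

lemma jap_le_jap_add_norm_sub : jap x ≤ jap y + ‖x - y‖ := by
  refine sqrt_le_iff.2 ⟨add_nonneg (jap_pos y).le (norm_nonneg _), ?_⟩
  calc 1 + ‖x‖ ^ 2 ≤ 1 + (‖y‖ + ‖x - y‖) ^ 2 := by
        gcongr
        exact norm_le_norm_add_norm_sub' x y
    _ = jap y ^ 2 + 2 * ‖y‖ * ‖x - y‖ + ‖x - y‖ ^ 2 := by rw [jap_sq]; ring
    _ ≤ jap y ^ 2 + 2 * jap y * ‖x - y‖ + ‖x - y‖ ^ 2 := by
        gcongr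
        exact norm_le_jap y
    _ = (jap y + ‖x - y‖) ^ 2 := by ring

variable {x y}

lemma jap_add_le_two_mul_jap (h : ‖y‖ ≤ jap x) : jap (x + y) ≤ 2 * jap x := by
  have hlip := jap_le_jap_add_norm_sub (x + y) x
  rw [add_sub_cancel_left] at hlip
  linarith

lemma jap_le_two_mul_jap_add (h : ‖y‖ ≤ 1 / 2 * jap x) : jap x ≤ 2 * jap (x + y) := by
  have hlip := jap_le_jap_add_norm_sub x (x + y)
  rw [sub_add_cancel_left, norm_neg] at hlip
  linarith

end JapaneseBracket

section Weight

variable {d : ℕ} {μ κ₀ E : ℝ} {x y : EuclideanSpace ℝ (Fin d)}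

lemma fE_nonneg : 0 ≤ fE μ κ₀ E x :=
  sqrt_nonneg _

lemma norm_le_mul_jap_of_gMet_le_sq {c : ℝ} {v η : EuclideanSpace ℝ (Fin d)} (hc : 0 ≤ c)
    (h : gMet μ κ₀ E x v η ≤ c ^ 2) : ‖v‖ ≤ c * jap x := by
  have hv : (‖v‖ / jap x) ^ 2 ≤ c ^ 2 := by
    rw [div_pow]
    exact (le_add_of_nonneg_right (by positivity)).trans h
  exact (div_le_iff₀ (jap_pos x)).1 (le_of_sq_le_sq hv hc)

lemma fE_le_mul_fE_of_jap_le_mul_jap {r : ℝ} (hμ0 : 0 ≤ μ) (hμ2 : μ < 2) (hE : 0 ≤ E)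
    (hr : 1 ≤ r) (h : jap x ≤ r * jap y) : fE μ κ₀ E y ≤ r * fE μ κ₀ E x := by
  have hr0 : 0 < r := one_pos.trans_le hr
  have hb : 0 < 1 - μ / 2 := by linarith
  have hx := jap_pos x
  have hpow : jap y ^ (-μ) ≤ r ^ 2 * jap x ^ (-μ) :=
    calc jap y ^ (-μ) ≤ r ^ μ * jap x ^ (-μ) :=
          rpow_neg_le_rpow_mul_rpow_neg hr0 hx (jap_pos y).le hμ0 h
      _ ≤ r ^ (2 : ℝ) * jap x ^ (-μ) := by gcongr
      _ = r ^ 2 * jap x ^ (-μ) := by rw [rpow_two]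
  have hconst : (κ₀ ^ 2)⁻¹ * E ≤ r ^ 2 * ((κ₀ ^ 2)⁻¹ * E) :=
    le_mul_of_one_le_left (by positivity) (one_le_pow₀ hr)
  refine sqrt_le_iff.2 ⟨mul_nonneg hr0.le fE_nonneg, ?_⟩
  calc (κ₀ ^ 2)⁻¹ * E + (1 - μ / 2)⁻¹ * jap y ^ (-μ)
      ≤ r ^ 2 * ((κ₀ ^ 2)⁻¹ * E) + (1 - μ / 2)⁻¹ * (r ^ 2 * jap x ^ (-μ)) := by gcongr
    _ = r ^ 2 * ((κ₀ ^ 2)⁻¹ * E + (1 - μ / 2)⁻¹ * jap x ^ (-μ)) := by ring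
    _ = (r * fE μ κ₀ E x) ^ 2 := by rw [mul_pow, fE, sq_sqrt (by positivity)]

lemma one_le_fE_mul_jap (hμ0 : 0 ≤ μ) (hμ2 : μ < 2) (hE : 0 ≤ E) :
    1 ≤ fE μ κ₀ E x * jap x := by
  have hx := jap_pos x
  have hb : 1 ≤ (1 - μ / 2)⁻¹ := (one_le_inv₀ (by linarith)).2 (by linarith)
  have hinv : (jap x)⁻¹ ^ 2 ≤ (κ₀ ^ 2)⁻¹ * E + (1 - μ / 2)⁻¹ * jap x ^ (-μ) :=
    calc (jap x)⁻¹ ^ 2 = jap x ^ (-2 : ℝ) := by rw [rpow_neg hx.le, rpow_two, inv_pow]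
      _ ≤ jap x ^ (-μ) := rpow_le_rpow_of_exponent_le (one_le_jap x) (by linarith)
      _ ≤ (1 - μ / 2)⁻¹ * jap x ^ (-μ) := le_mul_of_one_le_left (by positivity) hb
      _ ≤ (κ₀ ^ 2)⁻¹ * E + (1 - μ / 2)⁻¹ * jap x ^ (-μ) :=
        le_add_of_nonneg_left (by positivity)
  exact (inv_le_iff_one_le_mul₀ hx).1 (le_sqrt_of_sq_le hinv)

lemma fE_le_two_mul_fE_mul_sqrt (hμ0 : 0 ≤ μ) (hμ2 : μ < 2) (hE : 0 ≤ E) :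
    fE μ κ₀ E y ≤ 2 * fE μ κ₀ E x * √(1 + (fE μ κ₀ E y * ‖x - y‖) ^ 2) := by
  have hfx : 0 ≤ fE μ κ₀ E x := fE_nonneg
  have hfy : 0 ≤ fE μ κ₀ E y := fE_nonneg
  rcases le_or_gt (jap x) (2 * jap y) with hnear | hfar
  · calc fE μ κ₀ E y ≤ 2 * fE μ κ₀ E x :=
          fE_le_mul_fE_of_jap_le_mul_jap hμ0 hμ2 hE one_le_two hnear
      _ ≤ 2 * fE μ κ₀ E x * √(1 + (fE μ κ₀ E y * ‖x - y‖) ^ 2) :=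
          le_mul_of_one_le_right (by positivity)
            (one_le_sqrt.2 (le_add_of_nonneg_right (sq_nonneg _)))
  · have hdist : jap x ≤ 2 * ‖x - y‖ := by linarith [jap_le_jap_add_norm_sub x y]
    calc fE μ κ₀ E y ≤ fE μ κ₀ E y * (fE μ κ₀ E x * jap x) :=
          le_mul_of_one_le_right hfy (one_le_fE_mul_jap hμ0 hμ2 hE)
      _ ≤ fE μ κ₀ E y * (fE μ κ₀ E x * (2 * ‖x - y‖)) := by gcongr
      _ = 2 * fE μ κ₀ E x * (fE μ κ₀ E y * ‖x - y‖) := by ring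
      _ ≤ 2 * fE μ κ₀ E x * √(1 + (fE μ κ₀ E y * ‖x - y‖) ^ 2) := by
          gcongr
          exact le_sqrt_of_sq_le (le_add_of_nonneg_left zero_le_one)

end Weight

theorem stmt_17_general {d : ℕ} {μ κ₀ E : ℝ} (hμ0 : 0 ≤ μ) (hμ2 : μ < 2) (_hκ₀ : 0 < κ₀)
    (hE : 0 ≤ E) :
    (∀ x y η : EuclideanSpace ℝ (Fin d), gMet μ κ₀ E x y η ≤ 1 / 4 →
      fE μ κ₀ E x / 2 ≤ fE μ κ₀ E (x + y) ∧ fE μ κ₀ E (x + y) ≤ 2 * fE μ κ₀ E x) ∧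
    (∀ x y ξ η : EuclideanSpace ℝ (Fin d),
      fE μ κ₀ E y ≤ 2 * fE μ κ₀ E x *
        (1 + fE μ κ₀ E y ^ 2 * ‖x - y‖ ^ 2 + jap y ^ 2 * ‖ξ - η‖ ^ 2) ^ (1 / 2 : ℝ)) := by
  refine ⟨fun x y η h ↦ ?_, fun x y ξ η ↦ ?_⟩
  · have hy : ‖y‖ ≤ 1 / 2 * jap x :=
      norm_le_mul_jap_of_gMet_le_sq one_half_pos.le (h.trans_eq (by norm_num))
    have hy' : ‖y‖ ≤ jap x := hy.trans (by linarith [jap_pos x])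
    exact ⟨(div_le_iff₀' two_pos).2 <| fE_le_mul_fE_of_jap_le_mul_jap hμ0 hμ2 hE one_le_two
        (jap_add_le_two_mul_jap hy'),
      fE_le_mul_fE_of_jap_le_mul_jap hμ0 hμ2 hE one_le_two (jap_le_two_mul_jap_add hy)⟩
  · rw [← sqrt_eq_rpow, ← mul_pow, ← mul_pow]
    refine (fE_le_two_mul_fE_mul_sqrt hμ0 hμ2 hE).trans
      (mul_le_mul_of_nonneg_left (sqrt_le_sqrt ?_) (mul_nonneg two_pos.le fE_nonneg))
    exact le_add_of_nonneg_right (sq_nonneg _)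

/-- `f_E` is a uniformly temperate weight function for the metric `g_E`,
uniformly in `E ∈ (0,1]` (Lemma 4.3 (ii)). -/
theorem stmt_17 (d : ℕ) (hd : 1 ≤ d) (μ κ₀ : ℝ)
    (hμ0 : 0 < μ) (hμ2 : μ < 2) (hκ₀ : 0 < κ₀) :
    (∃ c C : ℝ, 0 < c ∧ 0 < C ∧ ∀ E ∈ Set.Ioc (0:ℝ) 1,
      ∀ x y η : EuclideanSpace ℝ (Fin d),
        ‖y‖ ^ 2 / jap x ^ 2 + ‖η‖ ^ 2 / fE μ κ₀ E x ^ 2 ≤ c →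
          fE μ κ₀ E x / C ≤ fE μ κ₀ E (x + y) ∧ fE μ κ₀ E (x + y) ≤ C * fE μ κ₀ E x) ∧
    (∃ C' N : ℝ, 0 < C' ∧ 0 < N ∧ ∀ E ∈ Set.Ioc (0:ℝ) 1,
      ∀ x y ξ η : EuclideanSpace ℝ (Fin d),
        fE μ κ₀ E y ≤ C' * fE μ κ₀ E x *
          (1 + fE μ κ₀ E y ^ 2 * ‖x - y‖ ^ 2 + jap y ^ 2 * ‖ξ - η‖ ^ 2) ^ N) := by
  exact ⟨⟨1 / 4, 2, by norm_num, two_pos, fun E hE ↦ (stmt_17_general hμ0.le hμ2 hκ₀ hE.1.le).1⟩,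
    ⟨2, 1 / 2, two_pos, one_half_pos, fun E hE ↦ (stmt_17_general hμ0.le hμ2 hκ₀ hE.1.le).2⟩⟩
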